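/- arXiv:1206.5512 — 4 statements merged into one kernel-verified Lean document; each statement's English description precedes it below -/
import Mathlib

section
/- Let A be an invertible n×n complex matrix, x0, b ∈ ℂⁿ, r0 = b − A·x0 with β = ‖r0‖ ≠ 0. Let V be an n×(j+1) complex matrix with orthonormal columns whose first column is r0/β, let Vj be its first j columns, and let H̄ = (h_{i,l}) be a (j+1)×j complex matrix that is upper Hessenberg (h_{i,l} = 0 whenever i > l+1) such that A·Vj = V·H̄ and h_{i+1,i} ≠ 0 for all i = 1,…,j−1. Then there exists y ∈ ℂʲ with A(x0 + Vj·y) = b (i.e. the GMRES iterate at step j solves the system exactly) if and only if h_{j+1,j} = 0. -/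
open Matrix

/-- Euclidean (ℓ²) norm of a complex vector. -/
noncomputable def vecNorm {n : ℕ} (v : Fin n → ℂ) : ℝ :=
  ‖(WithLp.equiv 2 (Fin n → ℂ)).symm v‖

/-- Operator (spectral) norm of a complex matrix, induced by the Euclidean vector norm. -/
noncomputable def matNorm {m n : ℕ} (A : Matrix (Fin m) (Fin n) ℂ) : ℝ :=
  sSup ((fun y => vecNorm (A.mulVec y)) '' {y | vecNorm y ≤ 1})

/-- Smallest singular value of a (tall) complex matrix:
`σ_min(B) = inf {‖B·y‖ : ‖y‖ = 1}`. -/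
noncomputable def sigMin {p q : ℕ} (B : Matrix (Fin p) (Fin q) ℂ) : ℝ :=
  sInf ((fun y => vecNorm (B.mulVec y)) '' {y | vecNorm y = 1})

/-- The leading (j+1)×j submatrix of a (m+1)×m matrix. -/
def lead {m : ℕ} (H : Matrix (Fin (m + 1)) (Fin m) ℂ) (j : ℕ) (hj : j ≤ m) :
    Matrix (Fin (j + 1)) (Fin j) ℂ :=
  fun i l => H (Fin.castLE (Nat.succ_le_succ hj) i) (Fin.castLE hj l)

/-- the GMRES iterate at step j is an exact solution iff
`h_{j+1,j} = 0` (for an unreduced upper-Hessenberg Arnoldi relation). -/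
theorem gmres_exact_iff_breakdown (n j : ℕ) (hj : 0 < j)
    (A : Matrix (Fin n) (Fin n) ℂ) (hA : IsUnit A)
    (x0 b r0 : Fin n → ℂ) (hr0 : r0 = b - A.mulVec x0)
    (β : ℝ) (hβdef : β = vecNorm r0) (hβ : β ≠ 0)
    (V : Matrix (Fin n) (Fin (j + 1)) ℂ) (hV : Vᴴ * V = 1)
    (hv1 : ∀ i, V i 0 = r0 i / (β : ℂ))
    (Vj : Matrix (Fin n) (Fin j) ℂ) (hVj : Vj = V.submatrix id Fin.castSucc)
    (H : Matrix (Fin (j + 1)) (Fin j) ℂ)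
    (hHess : ∀ (i : Fin (j + 1)) (l : Fin j), (l : ℕ) + 1 < (i : ℕ) → H i l = 0)
    (hArnoldi : A * Vj = V * H)
    (hsub : ∀ i : Fin j, (i : ℕ) + 1 < j → H i.succ i ≠ 0) :
    (∃ y : Fin j → ℂ, A.mulVec (x0 + Vj.mulVec y) = b) ↔
      H (Fin.last j) ⟨j - 1, by omega⟩ = 0 := by
  have hVr : r0 = V.mulVec (Pi.single 0 (β : ℂ)) := by
    ext i
    have hb : (β : ℂ) ≠ 0 := by exact_mod_cast hβ
    simp [Matrix.mulVec_single, hv1]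
    field_simp
  have hVinj : ∀ u w, V.mulVec u = V.mulVec w → u = w := by
    intro u w h
    have := congrArg (Vᴴ).mulVec h
    simpa [Matrix.mulVec_mulVec, hV] using this
  have hVj1 : Vjᴴ * Vj = 1 := by
    have : Vjᴴ * Vj = (Vᴴ * V).submatrix Fin.castSucc Fin.castSucc := by
      subst hVj
      ext a c
      simp [Matrix.mul_apply]
    rw [this, hV, Matrix.submatrix_one _ (Fin.castSucc_injective j)]
  have hAinj : ∀ u w, A.mulVec u = A.mulVec w → u = w := fun u w h =>
    Matrix.mulVec_injective_iff_isUnit.mpr hA h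
  have hHinj : ∀ y, H.mulVec y = 0 → y = 0 := by
    intro y h
    have h1 : A.mulVec (Vj.mulVec y) = A.mulVec 0 := by
      rw [Matrix.mulVec_mulVec, hArnoldi, ← Matrix.mulVec_mulVec, h]; simp
    have h2 := congrArg (Vjᴴ).mulVec (hAinj _ _ h1)
    simpa [Matrix.mulVec_mulVec, hVj1] using h2
  have key : ∀ y, A.mulVec (x0 + Vj.mulVec y) = b ↔ H.mulVec y = Pi.single 0 (β : ℂ) := by
    intro y
    have e : A.mulVec (x0 + Vj.mulVec y) = b ↔ V.mulVec (H.mulVec y) = r0 := by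
      rw [Matrix.mulVec_add, Matrix.mulVec_mulVec, Matrix.mulVec_mulVec, hArnoldi, hr0,
        eq_sub_iff_add_eq, add_comm]
    rw [e, hVr]
    exact ⟨hVinj _ _, fun h => by rw [h]⟩
  simp only [key]
  constructor
  · rintro ⟨y, hy⟩
    by_contra hne
    have hdet : (H.submatrix Fin.succ id).det ≠ 0 := by
      rw [Matrix.det_of_isUpperTriangular]
      · rw [Finset.prod_ne_zero_iff]
        intro i _
        by_cases hi : (i : ℕ) + 1 < j
        · exact hsub i hi
        · have h1 : i = ⟨j - 1, by omega⟩ := Fin.ext (by simp; omega)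
          have h2 : i.succ = Fin.last j := Fin.ext (by simp; omega)
          simp only [Matrix.submatrix_apply, id]
          rw [h2, h1]; exact hne
      · intro a c hac
        apply hHess
        have : (c : ℕ) < a := hac
        simpa using this
    have hz : (H.submatrix Fin.succ id).mulVec y = 0 := by
      ext i
      have := congrFun hy i.succ
      simpa [Matrix.mulVec, dotProduct] using this
    have hy0 := Matrix.eq_zero_of_mulVec_eq_zero hdet hz
    have := congrFun hy 0
    rw [hy0] at this
    simp at this
    exact hβ (by exact_mod_cast this.symm)
  · intro h0
    have hlast : ∀ l, H (Fin.last j) l = 0 := by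
      intro l
      by_cases hl : (l : ℕ) + 1 < j
      · exact hHess _ _ (by simpa using hl)
      · have h1 : l = ⟨j - 1, by omega⟩ := Fin.ext (by simp; omega)
        rw [h1]; exact h0
    have hl2 : ∀ y, H.mulVec y (Fin.last j) = 0 := by
      intro y
      simp [Matrix.mulVec, dotProduct, hlast]
    set S := H.submatrix Fin.castSucc id with hS
    have hSi : Function.Injective S.mulVec := by
      rw [← Matrix.coe_mulVecLin, injective_iff_map_eq_zero]
      intro y hy
      apply hHinj
      ext i
      refine Fin.lastCases (hl2 y) (fun i => ?_) i
      exact congrFun hy i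
    have hSs := Matrix.mulVec_surjective_iff_isUnit.mpr (Matrix.mulVec_injective_iff_isUnit.mp hSi)
    obtain ⟨y, hy⟩ := hSs (Pi.single ⟨0, hj⟩ (β : ℂ))
    refine ⟨y, ?_⟩
    ext i
    refine Fin.lastCases ?_ (fun i => ?_) i
    · rw [hl2, Pi.single_eq_of_ne]
      intro h
      have := congrArg Fin.val h
      simp at this; omega
    · have := congrFun hy i
      change H.mulVec y i.castSucc = _ at this
      rw [this]
      simp only [Pi.single_apply, Fin.ext_iff]
      by_cases h : (i : ℕ) = 0 <;> simp [h]
end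

section
/- Let A and E_1,…,E_m be n×n complex matrices, let r0 ∈ ℂⁿ, and let V be an n×(m+1) complex matrix with orthonormal columns v_1,…,v_{m+1}; write V_m for its first m columns. Let H̄ be a (m+1)×m complex matrix such that the inexact Arnoldi relation (A + E_i)·v_i = V·H̄·e_i holds for every i = 1,…,m. Then for every y ∈ ℂᵐ, the true residual r = r0 − A·V_m·y and the computed residual r̃ = r0 − V·H̄·y satisfy r − r̃ = Σ_{i=1}^m y_i · E_i·v_i, and consequently ‖r − r̃‖ ≤ Σ_{i=1}^m |y_i| · ‖E_i‖. -/
open Matrix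

theorem matNorm_bound {m n : ℕ} (A : Matrix (Fin m) (Fin n) ℂ) (y : Fin n → ℂ)
    (hy : vecNorm y ≤ 1) : vecNorm (A.mulVec y) ≤ matNorm A := by
  unfold matNorm
  apply le_csSup
  · let L := LinearMap.toContinuousLinearMap (Matrix.toLpLin 2 2 A)
    refine ⟨‖L‖, ?_⟩
    rintro _ ⟨z, hz, rfl⟩
    have h := L.le_opNorm (WithLp.toLp 2 z)
    have hz' : ‖WithLp.toLp 2 z‖ ≤ 1 := hz
    have h2 : vecNorm (A.mulVec z) = ‖L (WithLp.toLp 2 z)‖ := rfl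
    show vecNorm (A.mulVec z) ≤ _
    rw [h2]
    exact h.trans (mul_le_of_le_one_right (norm_nonneg _) hz')
  · exact ⟨y, hy, rfl⟩

theorem vecNorm_sum_le {n m : ℕ} (y : Fin m → ℂ) (w : Fin m → Fin n → ℂ) :
    vecNorm (∑ i, y i • w i) ≤ ∑ i, ‖y i‖ * vecNorm (w i) := by
  have h : vecNorm (∑ i, y i • w i) = ‖∑ i, y i • WithLp.toLp 2 (w i)‖ := by
    unfold vecNorm
    congr 1
    ext k
    simp
  rw [h]
  refine (norm_sum_le _ _).trans (le_of_eq ?_)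
  refine Finset.sum_congr rfl fun i _ => ?_
  rw [norm_smul]
  rfl

theorem vecNorm_col {n k : ℕ} (V : Matrix (Fin n) (Fin k) ℂ) (hV : Vᴴ * V = 1) (j : Fin k) :
    vecNorm (fun l => V l j) ≤ 1 := by
  have h := congrFun (congrFun hV j) j
  rw [Matrix.mul_apply, Matrix.one_apply_eq] at h
  have h3 : ∑ l, ‖V l j‖ ^ 2 = 1 := by
    have : ((∑ l, ‖V l j‖ ^ 2 : ℝ) : ℂ) = 1 := by
      rw [← h]
      push_cast
      refine Finset.sum_congr rfl fun l _ => ?_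
      rw [Matrix.conjTranspose_apply]
      exact (Complex.conj_mul' _).symm
    exact_mod_cast this
  unfold vecNorm
  rw [EuclideanSpace.norm_eq]
  simp [h3]

/-- in the inexact Arnoldi relation `(A + E_i)·v_i = V·H̄·e_i`,
the gap between the true residual `r = r0 − A·V_m·y` and the computed residual
`r̃ = r0 − V·H̄·y` is `Σ_i y_i · E_i·v_i`, so `‖r − r̃‖ ≤ Σ_i |y_i|·‖E_i‖`. -/
theorem inexact_gmres_residual_gap (n m : ℕ) (A : Matrix (Fin n) (Fin n) ℂ)
    (E : Fin m → Matrix (Fin n) (Fin n) ℂ)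
    (r0 : Fin n → ℂ)
    (V : Matrix (Fin n) (Fin (m + 1)) ℂ) (hV : Vᴴ * V = 1)
    (H : Matrix (Fin (m + 1)) (Fin m) ℂ)
    (hArnoldi : ∀ i : Fin m,
      (A + E i).mulVec (fun l => V l i.castSucc) = (V * H).mulVec (Pi.single i 1)) :
    ∀ y : Fin m → ℂ,
      ((r0 - A.mulVec ((V.submatrix id Fin.castSucc).mulVec y)) -
          (r0 - (V * H).mulVec y) =
        ∑ i : Fin m, y i • (E i).mulVec (fun l => V l i.castSucc)) ∧
      vecNorm ((r0 - A.mulVec ((V.submatrix id Fin.castSucc).mulVec y)) -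
          (r0 - (V * H).mulVec y)) ≤
        ∑ i : Fin m, ‖y i‖ * matNorm (E i) := by
  intro y
  have key : (r0 - A.mulVec ((V.submatrix id Fin.castSucc).mulVec y)) -
          (r0 - (V * H).mulVec y) =
        ∑ i : Fin m, y i • (E i).mulVec (fun l => V l i.castSucc) := by
    have h1 : (V.submatrix id Fin.castSucc).mulVec y
        = ∑ i : Fin m, y i • (fun l => V l i.castSucc) := by
      ext k
      simp [Matrix.mulVec, dotProduct, mul_comm]
    have h2 : (V * H).mulVec y = ∑ i : Fin m, y i • (V * H).mulVec (Pi.single i 1) := by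
      ext k
      simp [Matrix.mulVec, dotProduct, mul_comm, Pi.single_apply]
    rw [h1, h2, Matrix.mulVec_sum, sub_sub_sub_cancel_left, ← Finset.sum_sub_distrib]
    refine Finset.sum_congr rfl fun i _ => ?_
    rw [← hArnoldi i, Matrix.add_mulVec, Matrix.mulVec_smul, smul_add, add_sub_cancel_left]
  refine ⟨key, ?_⟩
  rw [key]
  refine (vecNorm_sum_le _ _).trans (Finset.sum_le_sum fun i _ => ?_)
  exact mul_le_mul_of_nonneg_left (matNorm_bound _ _ (vecNorm_col V hV _)) (norm_nonneg _)
end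

section
/- Let f : ℝ → ℂ be a twice continuously differentiable function that is periodic with period 2, and let R be a positive integer. Suppose all low-frequency Fourier coefficients of f vanish: ∫_{−1}^{1} f(x)·e^{−iπmx} dx = 0 for every integer m with |m| ≤ R. Then the L² norm of the second derivative dominates the L² norm of f with factor π²R²: (∫_{−1}^{1} |f''(x)|² dx)^{1/2} ≥ π²·R² · (∫_{−1}^{1} |f(x)|² dx)^{1/2}. -/
open intervalIntegral

theorem hf_aux_coeff (g : ℝ → ℂ) (hg : ContDiff ℝ 1 g) (hper : ∀ x : ℝ, g (x + 2) = g x)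
    (n : ℤ) (hn : n ≠ 0) :
    ‖fourierCoeffOn (by norm_num : (-1 : ℝ) < 1) (deriv g) n‖ =
      Real.pi * |(n : ℝ)| * ‖fourierCoeffOn (by norm_num : (-1 : ℝ) < 1) g n‖ := by
  have hc : Continuous (deriv g) := hg.continuous_deriv (le_refl _)
  have h := fourierCoeffOn_of_hasDerivAt (by norm_num : (-1 : ℝ) < 1) hn
    (f := g) (f' := deriv g)
    (fun x _ => ((hg.differentiable (by norm_num)) x).hasDerivAt)
    (hc.intervalIntegrable _ _)
  have h1 : g 1 - g (-1) = 0 := by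
    have := hper (-1)
    norm_num at this
    rw [this, sub_self]
  rw [h1] at h
  have hn' : (0 : ℝ) < |(n : ℝ)| := by positivity
  rw [h]
  push_cast
  simp only [mul_zero, zero_sub, norm_mul, norm_neg, norm_div, norm_one, Complex.norm_I,
    Complex.norm_real, Complex.norm_intCast]
  have hp := Real.pi_pos
  rw [show ‖(1 : ℂ) - -1‖ = 2 by norm_num]
  simp only [Real.norm_eq_abs, abs_of_pos hp, Complex.norm_ofNat]
  field_simp

theorem hf_aux_memLp (g : ℝ → ℂ) (hg : Continuous g) :
    MeasureTheory.MemLp g 2 (MeasureTheory.volume.restrict (Set.Ioc (-1 : ℝ) 1)) := by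
  have h : MeasureTheory.MemLp g 2 (MeasureTheory.volume.restrict (Set.Icc (-1 : ℝ) 1)) := by
    obtain ⟨C, hC⟩ := (isCompact_Icc (a := (-1 : ℝ)) (b := 1)).exists_bound_of_continuousOn
      hg.continuousOn
    refine MeasureTheory.MemLp.of_bound hg.aestronglyMeasurable C ?_
    exact (MeasureTheory.ae_restrict_iff' measurableSet_Icc).2 (Filter.Eventually.of_forall hC)
  exact h.mono_measure (MeasureTheory.Measure.restrict_mono Set.Ioc_subset_Icc_self le_rfl)

/-- if all Fourier coefficients of a 2-periodic C² function `f`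
with frequencies `|m| ≤ R` vanish, then
`‖f''‖_{L²(−1,1)} ≥ π²R² ‖f‖_{L²(−1,1)}`. -/
theorem second_deriv_dominates_high_frequency
    (f : ℝ → ℂ) (hf : ContDiff ℝ 2 f) (hper : ∀ x : ℝ, f (x + 2) = f x)
    (R : ℕ) (hR : 0 < R)
    (hlow : ∀ m : ℤ, |m| ≤ (R : ℤ) →
      ∫ x in (-1 : ℝ)..1,
        f x * Complex.exp (-(Complex.I * (Real.pi : ℂ) * (m : ℂ) * (x : ℂ))) = 0) :
    Real.pi ^ 2 * (R : ℝ) ^ 2 * Real.sqrt (∫ x in (-1 : ℝ)..1, ‖f x‖ ^ 2) ≤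
      Real.sqrt (∫ x in (-1 : ℝ)..1, ‖iteratedDeriv 2 f x‖ ^ 2) := by
  have hab : (-1 : ℝ) < 1 := by norm_num
  have hf1 : ContDiff ℝ 1 (deriv f) := by
    have := (contDiff_succ_iff_deriv (n := 1) (f := f) (𝕜 := ℝ)).1 (by simpa [one_add_one_eq_two] using hf)
    exact this.2.2
  have hper' : ∀ x, deriv f (x + 2) = deriv f x := by
    intro x
    rw [← deriv_comp_add_const]
    congr 1
    funext y
    exact hper y
  have h2 : iteratedDeriv 2 f = deriv (deriv f) := by
    rw [iteratedDeriv_succ, iteratedDeriv_one]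
  rw [h2]
  have hc2 : Continuous (deriv (deriv f)) := hf1.continuous_deriv (le_refl _)
  have S1 := hasSum_sq_fourierCoeffOn hab (hf_aux_memLp f hf.continuous)
  have S2 := hasSum_sq_fourierCoeffOn hab (hf_aux_memLp _ hc2)
  have key : ∀ n : ℤ, (Real.pi ^ 2 * (R : ℝ) ^ 2) ^ 2 * ‖fourierCoeffOn hab f n‖ ^ 2 ≤
      ‖fourierCoeffOn hab (deriv (deriv f)) n‖ ^ 2 := by
    intro n
    by_cases hn : |n| ≤ (R : ℤ)
    · have : fourierCoeffOn hab f n = 0 := by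
        rw [fourierCoeffOn_eq_integral]
        have h0 := hlow n hn
        rw [smul_eq_zero]
        right
        rw [← h0]
        congr 1
        funext x
        rw [fourier_coe_apply, smul_eq_mul, mul_comm]
        congr 2
        push_cast
        ring
      rw [this]
      simp
    · push Not at hn
      have hn0 : n ≠ 0 := by
        rintro rfl
        simp at hn
        omega
      have hnR : (R : ℝ) ≤ |(n : ℝ)| := by exact_mod_cast hn.le
      rw [hf_aux_coeff _ hf1 hper' n hn0,
        hf_aux_coeff _ (hf.of_le (by norm_num)) hper n hn0, ← mul_pow]
      have hp := Real.pi_pos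
      have e : Real.pi * |(n : ℝ)| * (Real.pi * |(n : ℝ)| * ‖fourierCoeffOn hab f n‖)
        = Real.pi ^ 2 * |(n : ℝ)| ^ 2 * ‖fourierCoeffOn hab f n‖ := by ring
      rw [e]
      gcongr
  have hle := hasSum_le key (S1.mul_left _) S2
  have hle' : (Real.pi ^ 2 * (R : ℝ) ^ 2) ^ 2 * (∫ x in (-1 : ℝ)..1, ‖f x‖ ^ 2) ≤
      ∫ x in (-1 : ℝ)..1, ‖deriv (deriv f) x‖ ^ 2 := by
    simp only [smul_eq_mul] at hle
    norm_num at hle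
    linarith
  apply Real.le_sqrt_of_sq_le
  rw [mul_pow, Real.sq_sqrt]
  · exact hle'
  · exact intervalIntegral.integral_nonneg hab.le (fun x _ => by positivity)
end

section
/- (TT-ranks of a sum.) Let d ≥ 1, let n_1,…,n_d be positive integers, and let A and B be real d-dimensional tensors of size n_1×⋯×n_d admitting TT-decompositions A(i_1,…,i_d) = G_1(i_1)⋯G_d(i_d) with TT-ranks r_0,…,r_d (r_0 = r_d = 1) and B(i_1,…,i_d) = F_1(i_1)⋯F_d(i_d) with TT-ranks s_0,…,s_d (s_0 = s_d = 1). Then the tensor A + B (entrywise sum) admits a TT-decomposition with TT-ranks t_0,…,t_d where t_0 = t_d = 1 and t_k = r_k + s_k for 1 ≤ k ≤ d−1. -/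
/-- A `d`-dimensional real tensor `A` (with mode index types `ι k`) is in
TT-format with TT-ranks `r 0, …, r d` if there are cores `G k` assigning to each
index `i_k` an `r_{k-1} × r_k` real matrix, such that every entry of `A` equals
the corresponding product of core matrices; the product is written as a sum over
all tuples of intermediate (rank) indices. -/
def IsTT {d : ℕ} {ι : Fin d → Type} [∀ k, Fintype (ι k)]
    (r : Fin (d + 1) → ℕ) (A : (∀ k, ι k) → ℝ) : Prop :=
  ∃ G : (k : Fin d) → ι k → Matrix (Fin (r k.castSucc)) (Fin (r k.succ)) ℝ,
    ∀ i : ∀ k, ι k,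
      A i = ∑ α : (k : Fin (d + 1)) → Fin (r k),
        ∏ k : Fin d, G k (i k) (α k.castSucc) (α k.succ)

theorem tt_prod_aux (m : ℕ) (x y : Fin (m + 1) → ℝ)
    (h1 : ∀ k : Fin m, x k.castSucc * y k.succ = 0)
    (h2 : ∀ k : Fin m, y k.castSucc * x k.succ = 0) :
    ∏ k, (x k + y k) = ∏ k, x k + ∏ k, y k := by
  induction m with
  | zero => simp
  | succ m ih =>
    have e := ih (fun k => x k.castSucc) (fun k => y k.castSucc)
      (fun k => h1 k.castSucc) (fun k => h2 k.castSucc)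
    rw [Fin.prod_univ_castSucc, e, Fin.prod_univ_castSucc x, Fin.prod_univ_castSucc y]
    have a1 : (∏ k : Fin (m + 1), x k.castSucc) * y (Fin.last _) = 0 := by
      rw [Fin.prod_univ_castSucc, mul_assoc]
      have := h1 (Fin.last m)
      rw [Fin.succ_last] at this
      rw [this, mul_zero]
    have a2 : (∏ k : Fin (m + 1), y k.castSucc) * x (Fin.last _) = 0 := by
      rw [Fin.prod_univ_castSucc, mul_assoc]
      have := h2 (Fin.last m)
      rw [Fin.succ_last] at this
      rw [this, mul_zero]
    linear_combination a1 + a2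

open Classical in
/-- push a matrix forward along maps of its index sets -/
noncomputable def ttPush {a b c e : ℕ} (f : Fin a → Fin c) (g : Fin b → Fin e)
    (M : Matrix (Fin a) (Fin b) ℝ) : Matrix (Fin c) (Fin e) ℝ :=
  fun p q => if h : (∃ u, f u = p) ∧ (∃ v, g v = q) then M h.1.choose h.2.choose else 0

theorem ttPush_apply {a b c e : ℕ} (f : Fin a → Fin c) (g : Fin b → Fin e)
    (hf : Function.Injective f) (hg : Function.Injective g)
    (M : Matrix (Fin a) (Fin b) ℝ) (u : Fin a) (v : Fin b) :
    ttPush f g M (f u) (g v) = M u v := by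
  have h : (∃ u', f u' = f u) ∧ (∃ v', g v' = g v) := ⟨⟨u, rfl⟩, ⟨v, rfl⟩⟩
  unfold ttPush
  rw [dif_pos h, hf h.1.choose_spec, hg h.2.choose_spec]

theorem ttPush_left {a b c e : ℕ} (f : Fin a → Fin c) (g : Fin b → Fin e)
    (M : Matrix (Fin a) (Fin b) ℝ) (p : Fin c) (q : Fin e) (h : ¬ ∃ u, f u = p) :
    ttPush f g M p q = 0 := by
  unfold ttPush
  exact dif_neg fun h' => h h'.1

theorem ttPush_right {a b c e : ℕ} (f : Fin a → Fin c) (g : Fin b → Fin e)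
    (M : Matrix (Fin a) (Fin b) ℝ) (p : Fin c) (q : Fin e) (h : ¬ ∃ u, g u = q) :
    ttPush f g M p q = 0 := by
  unfold ttPush
  exact dif_neg fun h' => h h'.2

theorem tt_sum_push (m : ℕ) (r t : Fin (m + 1 + 1) → ℕ)
    (L : ∀ k, Fin (r k) → Fin (t k)) (hL : ∀ k, Function.Injective (L k))
    (M : (k : Fin (m + 1)) → Matrix (Fin (r k.castSucc)) (Fin (r k.succ)) ℝ) :
    ∑ α : (k : Fin (m + 1 + 1)) → Fin (r k), ∏ k : Fin (m + 1), M k (α k.castSucc) (α k.succ) =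
    ∑ α : (k : Fin (m + 1 + 1)) → Fin (t k), ∏ k : Fin (m + 1),
      ttPush (L k.castSucc) (L k.succ) (M k) (α k.castSucc) (α k.succ) := by
  refine Fintype.sum_of_injective (fun α k => L k (α k)) ?_ _ _ ?_ ?_
  · intro α β h
    funext k
    exact hL k (congrFun h k)
  · intro α hα
    have : ∃ k, ¬ ∃ u, L k u = α k := by
      by_contra hc
      push Not at hc
      choose u hu using hc
      exact hα ⟨u, funext hu⟩
    obtain ⟨k, hk⟩ := this
    induction k using Fin.cases with
    | zero => exact Finset.prod_eq_zero (Finset.mem_univ 0) (ttPush_left _ _ _ _ _ hk)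
    | succ j => exact Finset.prod_eq_zero (Finset.mem_univ j) (ttPush_right _ _ _ _ _ hk)
  · intro α
    refine Finset.prod_congr rfl fun k _ => ?_
    exact (ttPush_apply _ _ (hL _) (hL _) _ _ _).symm

theorem tt_embed (P : Prop) [Decidable P] (a b : ℕ) (ha : P → a = 1) (hb : P → b = 1) :
    ∃ (L : Fin a → Fin (if P then 1 else a + b)) (R : Fin b → Fin (if P then 1 else a + b)),
      Function.Injective L ∧ Function.Injective R ∧ (¬ P → ∀ u v, L u ≠ R v) := by
  by_cases h : P
  · have e : (if P then 1 else a + b) = 1 := if_pos h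
    generalize (if P then 1 else a + b) = t at e
    subst e
    obtain rfl := ha h
    obtain rfl := hb h
    exact ⟨id, id, Function.injective_id, Function.injective_id, fun h' => absurd h h'⟩
  · have e : (if P then 1 else a + b) = a + b := if_neg h
    generalize (if P then 1 else a + b) = t at e
    subst e
    refine ⟨Fin.castAdd b, Fin.natAdd a, Fin.castAdd_injective a b, Fin.natAdd_injective b a, ?_⟩
    intro _ u v e
    have := congrArg Fin.val e
    simp at this
    omega

/-- the entrywise sum of two TT tensors with ranks `r` and `s`
(with unit boundary ranks) admits a TT-decomposition with boundary ranks 1 and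
intermediate ranks `r k + s k`. -/
theorem isTT_add (d : ℕ) (hd : 1 ≤ d) (n : Fin d → ℕ) (hn : ∀ k, 0 < n k)
    (r s : Fin (d + 1) → ℕ)
    (hr0 : r 0 = 1) (hrd : r (Fin.last d) = 1)
    (hs0 : s 0 = 1) (hsd : s (Fin.last d) = 1)
    (A B : (∀ k, Fin (n k)) → ℝ)
    (hA : IsTT r A) (hB : IsTT s B) :
    IsTT (fun k => if k = 0 ∨ k = Fin.last d then 1 else r k + s k) (A + B) := by
  obtain ⟨m, rfl⟩ : ∃ m, d = m + 1 := ⟨d - 1, by omega⟩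
  obtain ⟨G, hG⟩ := hA
  obtain ⟨F, hF⟩ := hB
  have key := fun k : Fin (m + 1 + 1) => tt_embed (k = 0 ∨ k = Fin.last (m + 1)) (r k) (s k)
    (by rintro (rfl | rfl) <;> assumption) (by rintro (rfl | rfl) <;> assumption)
  choose L R hL hR hLR using key
  have hint : ∀ k : Fin m, ¬ (k.succ.castSucc = 0 ∨ k.succ.castSucc = Fin.last (m + 1)) := by
    intro k
    simp only [Fin.ext_iff, Fin.val_castSucc, Fin.val_succ, Fin.val_last, Fin.val_zero]
    omega
  refine ⟨fun k i => ttPush (L k.castSucc) (L k.succ) (G k i) +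
    ttPush (R k.castSucc) (R k.succ) (F k i), fun i => ?_⟩
  rw [Pi.add_apply, hG, hF, tt_sum_push m r _ L hL (fun k => G k (i k)),
    tt_sum_push m s _ R hR (fun k => F k (i k)), ← Finset.sum_add_distrib]
  refine Finset.sum_congr rfl fun α _ => ?_
  symm
  refine tt_prod_aux m _ _ (fun k => ?_) (fun k => ?_)
  · by_cases h : ∃ u, L k.succ.castSucc u = α k.succ.castSucc
    · obtain ⟨u, hu⟩ := h
      refine mul_eq_zero_of_right _ (ttPush_left _ _ _ _ _ ?_)
      rintro ⟨v, hv⟩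
      exact hLR _ (hint k) u v (hu.trans hv.symm)
    · exact mul_eq_zero_of_left (ttPush_right _ _ _ _ _ h) _
  · by_cases h : ∃ u, L k.succ.castSucc u = α k.succ.castSucc
    · obtain ⟨u, hu⟩ := h
      refine mul_eq_zero_of_left (ttPush_right _ _ _ _ _ ?_) _
      rintro ⟨v, hv⟩
      exact hLR _ (hint k) u v (hu.trans hv.symm)
    · exact mul_eq_zero_of_right _ (ttPush_left _ _ _ _ _ h)
end
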